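/- arXiv:math/0208139 — 2 statements merged into one kernel-verified Lean document; each statement's English description precedes it below -/
import Mathlib

section
/- If Re(s) ≥ 0, then ‖Dw‖ ≤ √R·( ‖w‖ + ‖H‖ ). -/
open MeasureTheory Complex

noncomputable section

/-- Partial derivative in the first (x) variable. -/
def pdx (f : ℝ → ℝ → ℂ) : ℝ → ℝ → ℂ := fun x y => deriv (fun x' => f x' y) x

/-- Partial derivative in the second (y) variable. -/
def pdy (f : ℝ → ℝ → ℂ) : ℝ → ℝ → ℂ := fun x y => deriv (fun y' => f x y') y

/-- Laplacian in the space variables. -/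
def lap (f : ℝ → ℝ → ℂ) : ℝ → ℝ → ℂ := fun x y => pdx (pdx f) x y + pdy (pdy f) x y

/-- Square of the L² norm over Ω = [0,1] × [0,1]. -/
def nsq (f : ℝ → ℝ → ℂ) : ℝ := ∫ x in (0:ℝ)..(1:ℝ), ∫ y in (0:ℝ)..(1:ℝ), ‖f x y‖ ^ 2

/-- Smoothness of a function of two real variables. -/
def SmoothFn (f : ℝ → ℝ → ℂ) : Prop := ContDiff ℝ (⊤ : ℕ∞) (fun q : ℝ × ℝ => f q.1 q.2)

/-- 1-periodicity in the first variable. -/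
def PeriodicX (f : ℝ → ℝ → ℂ) : Prop := ∀ x y, f (x + 1) y = f x y

/-!
Take the real part of the `L²` inner product of each momentum equation with its velocity component.
Transport by a shear `a(y)∂ₓ` is skew-adjoint under periodicity in `x`, the Laplacian produces
`-‖Dw‖²` by no-slip, and the two pressure terms add up to the pairing of `p` with `div w = 0`. This
leaves
  `Re s ‖w‖² + R⁻¹ ‖Dw‖² = Re⟨w, H⟩ - Re⟨u, v⟩`,
whose right-hand side is at most `‖w‖² + ‖H‖² / 2` by Young's inequality.
-/

section IteratedIntegral

variable {E : Type*} [NormedAddCommGroup E] [NormedSpace ℝ E] {f g : ℝ → ℝ → E} {a b c d : ℝ}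

lemma intervalIntegral_intervalIntegral_add
    (hf : Continuous fun q : ℝ × ℝ => f q.1 q.2) (hg : Continuous fun q : ℝ × ℝ => g q.1 q.2) :
    ∫ x in a..b, ∫ y in c..d, (f x y + g x y)
      = (∫ x in a..b, ∫ y in c..d, f x y) + ∫ x in a..b, ∫ y in c..d, g x y := by
  have inner_add (x : ℝ) :
      ∫ y in c..d, (f x y + g x y) = (∫ y in c..d, f x y) + ∫ y in c..d, g x y :=
    intervalIntegral.integral_add
      (Continuous.intervalIntegrable (by fun_prop) _ _)
      (Continuous.intervalIntegrable (by fun_prop) _ _)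
  simp only [inner_add]
  exact intervalIntegral.integral_add
    (Continuous.intervalIntegrable (by fun_prop) _ _)
    (Continuous.intervalIntegrable (by fun_prop) _ _)

variable [CompleteSpace E]

lemma intervalIntegral_intervalIntegral_eq_zero_of_hasDerivAt_snd
    (hderiv : ∀ x y, HasDerivAt (fun y' => f x y') (g x y) y)
    (hg : Continuous fun q : ℝ × ℝ => g q.1 q.2) (hbdry : ∀ x, f x c = f x d) :
    ∫ x in a..b, ∫ y in c..d, g x y = 0 := by
  have inner_eq_zero (x : ℝ) : ∫ y in c..d, g x y = 0 := by
    rw [intervalIntegral.integral_eq_sub_of_hasDerivAt (fun y _ => hderiv x y)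
      (Continuous.intervalIntegrable (by fun_prop) _ _), hbdry, sub_self]
  simp only [inner_eq_zero, intervalIntegral.integral_zero]

lemma intervalIntegral_intervalIntegral_eq_zero_of_hasDerivAt_fst
    (hderiv : ∀ x y, HasDerivAt (fun x' => f x' y) (g x y) x)
    (hg : Continuous fun q : ℝ × ℝ => g q.1 q.2) (hbdry : ∀ y, f a y = f b y) :
    ∫ x in a..b, ∫ y in c..d, g x y = 0 := by
  have hint : IntegrableOn (fun q : ℝ × ℝ => g q.1 q.2) (Set.uIoc a b ×ˢ Set.uIoc c d) :=
    (hg.continuousOn.integrableOn_compact (isCompact_uIcc.prod isCompact_uIcc)).mono_set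
      (Set.prod_mono Set.uIoc_subset_uIcc Set.uIoc_subset_uIcc)
  rw [intervalIntegral_intervalIntegral_swap hint]
  exact intervalIntegral_intervalIntegral_eq_zero_of_hasDerivAt_snd (f := fun y x => f x y)
    (fun y x => hderiv x y) (hg.comp continuous_swap) hbdry

end IteratedIntegral

section PartialDerivatives

variable {f : ℝ → ℝ → ℂ}

lemma SmoothFn.continuous (hf : SmoothFn f) : Continuous fun q : ℝ × ℝ => f q.1 q.2 :=
  ContDiff.continuous hf

lemma SmoothFn.hasFDerivAt (hf : SmoothFn f) (q : ℝ × ℝ) :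
    HasFDerivAt (fun q : ℝ × ℝ => f q.1 q.2) (fderiv ℝ (fun q : ℝ × ℝ => f q.1 q.2) q) q :=
  (ContDiff.differentiable hf (by simp) q).hasFDerivAt

lemma SmoothFn.smoothFn_fderiv_apply (hf : SmoothFn f) (e : ℝ × ℝ) :
    SmoothFn fun x y => fderiv ℝ (fun q : ℝ × ℝ => f q.1 q.2) (x, y) e :=
  (ContDiff.fderiv_right (m := (⊤ : ℕ∞)) hf (by simp)).clm_apply contDiff_const

lemma SmoothFn.hasDerivAt_fst (hf : SmoothFn f) (x y : ℝ) :
    HasDerivAt (fun x' => f x' y) (fderiv ℝ (fun q : ℝ × ℝ => f q.1 q.2) (x, y) (1, 0)) x :=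
  HasFDerivAt.comp_hasDerivAt (f := fun x' => (x', y)) x (hf.hasFDerivAt (x, y))
    ((hasDerivAt_id x).prodMk (hasDerivAt_const x y))

lemma SmoothFn.hasDerivAt_snd (hf : SmoothFn f) (x y : ℝ) :
    HasDerivAt (fun y' => f x y') (fderiv ℝ (fun q : ℝ × ℝ => f q.1 q.2) (x, y) (0, 1)) y :=
  HasFDerivAt.comp_hasDerivAt (f := fun y' => (x, y')) y (hf.hasFDerivAt (x, y))
    ((hasDerivAt_const y x).prodMk (hasDerivAt_id y))

lemma SmoothFn.pdx_eq_fderiv (hf : SmoothFn f) (x y : ℝ) :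
    pdx f x y = fderiv ℝ (fun q : ℝ × ℝ => f q.1 q.2) (x, y) (1, 0) :=
  (hf.hasDerivAt_fst x y).deriv

lemma SmoothFn.pdy_eq_fderiv (hf : SmoothFn f) (x y : ℝ) :
    pdy f x y = fderiv ℝ (fun q : ℝ × ℝ => f q.1 q.2) (x, y) (0, 1) :=
  (hf.hasDerivAt_snd x y).deriv

lemma SmoothFn.hasDerivAt_pdx (hf : SmoothFn f) (x y : ℝ) :
    HasDerivAt (fun x' => f x' y) (pdx f x y) x :=
  (hf.hasDerivAt_fst x y).differentiableAt.hasDerivAt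

lemma SmoothFn.hasDerivAt_pdy (hf : SmoothFn f) (x y : ℝ) :
    HasDerivAt (fun y' => f x y') (pdy f x y) y :=
  (hf.hasDerivAt_snd x y).differentiableAt.hasDerivAt

protected lemma SmoothFn.pdx (hf : SmoothFn f) : SmoothFn (pdx f) := by
  simpa only [← hf.pdx_eq_fderiv] using hf.smoothFn_fderiv_apply (1, 0)

protected lemma SmoothFn.pdy (hf : SmoothFn f) : SmoothFn (pdy f) := by
  simpa only [← hf.pdy_eq_fderiv] using hf.smoothFn_fderiv_apply (0, 1)

protected lemma SmoothFn.lap (hf : SmoothFn f) : SmoothFn (lap f) :=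
  ContDiff.add hf.pdx.pdx hf.pdy.pdy

protected lemma PeriodicX.pdx (hf : PeriodicX f) : PeriodicX (pdx f) := fun x y => by
  have hshift : (fun x' => f (x' + 1) y) = fun x' => f x' y := funext fun x' => hf x' y
  simp only [pdx, ← deriv_comp_add_const (f := fun x' => f x' y), hshift]

lemma PeriodicX.apply_zero_eq_apply_one (hf : PeriodicX f) (y : ℝ) : f 0 y = f 1 y := by
  simpa using (hf 0 y).symm

end PartialDerivatives

/-- The real part of the `L²` inner product `⟨f, g⟩` over `Ω = [0,1] × [0,1]`, written as the
iterated integral of the real inner product of `ℂ = ℝ²` so that `l2Inner f f = nsq f`. -/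
def l2Inner (f g : ℝ → ℝ → ℂ) : ℝ :=
  ∫ x in (0 : ℝ)..1, ∫ y in (0 : ℝ)..1, inner ℝ (f x y) (g x y)

/-- The no-slip condition: `f` vanishes on the walls `y = 0` and `y = 1` of the channel. -/
def NoSlip (f : ℝ → ℝ → ℂ) : Prop := ∀ x, f x 0 = 0 ∧ f x 1 = 0

section L2Inner

variable {f g h : ℝ → ℝ → ℂ}

lemma l2Inner_self (f : ℝ → ℝ → ℂ) : l2Inner f f = nsq f := by
  simp only [l2Inner, nsq, real_inner_self_eq_norm_sq]

lemma nsq_nonneg (f : ℝ → ℝ → ℂ) : 0 ≤ nsq f :=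
  intervalIntegral.integral_nonneg zero_le_one fun _ _ =>
    intervalIntegral.integral_nonneg zero_le_one fun _ _ => by positivity

lemma l2Inner_comm (f g : ℝ → ℝ → ℂ) : l2Inner f g = l2Inner g f := by
  simp only [l2Inner, real_inner_comm]

lemma l2Inner_congr_right
    (hgh : ∀ x ∈ Set.Icc (0 : ℝ) 1, ∀ y ∈ Set.Icc (0 : ℝ) 1, g x y = h x y) :
    l2Inner f g = l2Inner f h := by
  rw [← Set.uIcc_of_le zero_le_one] at hgh
  refine intervalIntegral.integral_congr fun x hx =>
    intervalIntegral.integral_congr fun y hy => ?_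
  simp only [hgh x hx y hy]

lemma l2Inner_smul_right (c : ℝ) (f g : ℝ → ℝ → ℂ) : l2Inner f (c • g) = c * l2Inner f g := by
  simp only [l2Inner, Pi.smul_apply, real_inner_smul_right, intervalIntegral.integral_const_mul]

lemma l2Inner_complex_smul_self (s : ℂ) (f : ℝ → ℝ → ℂ) :
    l2Inner f (s • f) = s.re * nsq f := by
  have inner_mul_self (z : ℂ) : inner ℝ z (s * z) = s.re * ‖z‖ ^ 2 := by
    simp only [Complex.inner, Complex.sq_norm, Complex.normSq_apply, Complex.mul_re,
      Complex.mul_im, Complex.conj_re, Complex.conj_im]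
    ring
  simp only [l2Inner, nsq, Pi.smul_apply, smul_eq_mul, inner_mul_self,
    intervalIntegral.integral_const_mul]

lemma l2Inner_add_right (hf : Continuous fun q : ℝ × ℝ => f q.1 q.2)
    (hg : Continuous fun q : ℝ × ℝ => g q.1 q.2) (hh : Continuous fun q : ℝ × ℝ => h q.1 q.2) :
    l2Inner f (g + h) = l2Inner f g + l2Inner f h := by
  simp only [l2Inner, Pi.add_apply, inner_add_right]
  exact intervalIntegral_intervalIntegral_add (by fun_prop) (by fun_prop)

lemma l2Inner_sub_right (hf : Continuous fun q : ℝ × ℝ => f q.1 q.2)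
    (hg : Continuous fun q : ℝ × ℝ => g q.1 q.2) (hh : Continuous fun q : ℝ × ℝ => h q.1 q.2) :
    l2Inner f (g - h) = l2Inner f g - l2Inner f h := by
  rw [sub_eq_add_neg, ← neg_one_smul ℝ h, l2Inner_add_right hf hg (hh.const_smul (-1 : ℝ)),
    l2Inner_smul_right, neg_one_mul, sub_eq_add_neg]

lemma nsq_add (hf : Continuous fun q : ℝ × ℝ => f q.1 q.2)
    (hg : Continuous fun q : ℝ × ℝ => g q.1 q.2) :
    nsq (f + g) = nsq f + 2 * l2Inner f g + nsq g := by
  rw [← l2Inner_self, l2Inner_add_right (hf.add hg) hf hg, l2Inner_comm (f + g) f,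
    l2Inner_comm (f + g) g, l2Inner_add_right hf hf hg, l2Inner_add_right hg hf hg,
    l2Inner_comm g f, l2Inner_self, l2Inner_self]
  ring

lemma nsq_sub (hf : Continuous fun q : ℝ × ℝ => f q.1 q.2)
    (hg : Continuous fun q : ℝ × ℝ => g q.1 q.2) :
    nsq (f - g) = nsq f - 2 * l2Inner f g + nsq g := by
  have nsq_neg : nsq (-g) = nsq g := by simp only [nsq, Pi.neg_apply, norm_neg]
  rw [sub_eq_add_neg, nsq_add hf hg.neg, nsq_neg, ← neg_one_smul ℝ g, l2Inner_smul_right]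
  ring

lemma two_mul_abs_l2Inner_le (hf : Continuous fun q : ℝ × ℝ => f q.1 q.2)
    (hg : Continuous fun q : ℝ × ℝ => g q.1 q.2) :
    2 * |l2Inner f g| ≤ nsq f + nsq g := by
  have hadd := nsq_add hf hg ▸ nsq_nonneg (f + g)
  have hsub := nsq_sub hf hg ▸ nsq_nonneg (f - g)
  cases abs_cases (l2Inner f g) <;> linarith

end L2Inner

section IntegrationByParts

variable {f g : ℝ → ℝ → ℂ}

lemma l2Inner_pdx_right (hf : SmoothFn f) (hg : SmoothFn g) (hfp : PeriodicX f)
    (hgp : PeriodicX g) : l2Inner f (pdx g) = -l2Inner (pdx f) g := by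
  have := hf.continuous
  have := hg.continuous
  have := hf.pdx.continuous
  have := hg.pdx.continuous
  rw [eq_neg_iff_add_eq_zero, l2Inner, l2Inner,
    ← intervalIntegral_intervalIntegral_add (by fun_prop) (by fun_prop)]
  exact intervalIntegral_intervalIntegral_eq_zero_of_hasDerivAt_fst
    (fun x y => (hf.hasDerivAt_pdx x y).inner ℝ (hg.hasDerivAt_pdx x y)) (by fun_prop)
    fun y => by rw [hfp.apply_zero_eq_apply_one, hgp.apply_zero_eq_apply_one]

lemma l2Inner_pdy_right (hf : SmoothFn f) (hg : SmoothFn g) (hf0 : NoSlip f) :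
    l2Inner f (pdy g) = -l2Inner (pdy f) g := by
  have := hf.continuous
  have := hg.continuous
  have := hf.pdy.continuous
  have := hg.pdy.continuous
  rw [eq_neg_iff_add_eq_zero, l2Inner, l2Inner,
    ← intervalIntegral_intervalIntegral_add (by fun_prop) (by fun_prop)]
  exact intervalIntegral_intervalIntegral_eq_zero_of_hasDerivAt_snd
    (fun x y => (hf.hasDerivAt_pdy x y).inner ℝ (hg.hasDerivAt_pdy x y)) (by fun_prop)
    fun x => by rw [(hf0 x).1, (hf0 x).2, inner_zero_left, inner_zero_left]

lemma l2Inner_lap_self (hf : SmoothFn f) (hfp : PeriodicX f) (hf0 : NoSlip f) :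
    l2Inner f (lap f) = -(nsq (pdx f) + nsq (pdy f)) := by
  have hlap : lap f = pdx (pdx f) + pdy (pdy f) := rfl
  rw [hlap, l2Inner_add_right hf.continuous hf.pdx.pdx.continuous hf.pdy.pdy.continuous,
    l2Inner_pdx_right hf hf.pdx hfp hfp.pdx, l2Inner_pdy_right hf hf.pdy hf0,
    l2Inner_self, l2Inner_self, neg_add]

lemma l2Inner_shear_transport_eq_zero {a : ℝ → ℝ} (ha : Continuous a) (hf : SmoothFn f)
    (hfp : PeriodicX f) : l2Inner f (fun x y => (a y : ℂ) * pdx f x y) = 0 := by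
  have := hf.continuous
  have := hf.pdx.continuous
  refine intervalIntegral_intervalIntegral_eq_zero_of_hasDerivAt_fst
    (f := fun x y => a y / 2 * ‖f x y‖ ^ 2) (fun x y => ?_) (by fun_prop)
    fun y => by rw [hfp.apply_zero_eq_apply_one]
  have hval : inner ℝ (f x y) ((a y : ℂ) * pdx f x y)
      = a y / 2 * (2 * inner ℝ (f x y) (pdx f x y)) := by
    rw [← Complex.real_smul, real_inner_smul_right]
    ring
  exact hval ▸ (hf.hasDerivAt_pdx x y).norm_sq.const_mul (a y / 2)

lemma l2Inner_gradient_eq_zero {u v p : ℝ → ℝ → ℂ} (hu : SmoothFn u) (hv : SmoothFn v)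
    (hp : SmoothFn p) (hup : PeriodicX u) (hpp : PeriodicX p) (hv0 : NoSlip v)
    (hdiv : ∀ x y, pdx u x y + pdy v x y = 0) :
    l2Inner u (pdx p) + l2Inner v (pdy p) = 0 := by
  have hdiv' : pdx u + pdy v = (0 : ℝ) • p := by
    ext x y
    simpa using hdiv x y
  have hpair : l2Inner p (pdx u) + l2Inner p (pdy v) = 0 := by
    rw [← l2Inner_add_right hp.continuous hu.pdx.continuous hv.pdy.continuous, hdiv',
      l2Inner_smul_right, zero_mul]
  rw [l2Inner_pdx_right hu hp hup hpp, l2Inner_pdy_right hv hp hv0, l2Inner_comm _ p,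
    l2Inner_comm _ p]
  linarith

end IntegrationByParts

section EnergyIdentity

variable {a : ℝ → ℝ} {ν : ℝ} {s : ℂ}

lemma advection_diffusion_energy_identity {f h : ℝ → ℝ → ℂ} (ha : Continuous a)
    (hf : SmoothFn f) (hfp : PeriodicX f) (hf0 : NoSlip f)
    (heq : ∀ x ∈ Set.Icc (0 : ℝ) 1, ∀ y ∈ Set.Icc (0 : ℝ) 1,
      s * f x y + (a y : ℂ) * pdx f x y = (ν : ℂ) * lap f x y + h x y) :
    s.re * nsq f + ν * (nsq (pdx f) + nsq (pdy f)) = l2Inner f h := by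
  have cf := hf.continuous
  have cfx := hf.pdx.continuous
  have hsolve : l2Inner f h
      = l2Inner f (s • f + (fun x y => (a y : ℂ) * pdx f x y) - ν • lap f) := by
    refine l2Inner_congr_right fun x hx y hy => ?_
    simpa only [Pi.sub_apply, Pi.add_apply, Pi.smul_apply, smul_eq_mul, Complex.real_smul]
      using eq_sub_of_add_eq' (heq x hx y hy).symm
  have ctransport : Continuous fun q : ℝ × ℝ => (a q.2 : ℂ) * pdx f q.1 q.2 := by fun_prop
  rw [hsolve, l2Inner_sub_right cf ((cf.const_smul s).add ctransport)
      (hf.lap.continuous.const_smul ν),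
    l2Inner_add_right cf (cf.const_smul s) ctransport, l2Inner_complex_smul_self,
    l2Inner_shear_transport_eq_zero ha hf hfp, l2Inner_smul_right, l2Inner_lap_self hf hfp hf0]
  ring

lemma shear_flow_energy_identity {u v p f g : ℝ → ℝ → ℂ} (ha : Continuous a)
    (hu : SmoothFn u) (hv : SmoothFn v) (hp : SmoothFn p)
    (hf : Continuous fun q : ℝ × ℝ => f q.1 q.2) (hg : Continuous fun q : ℝ × ℝ => g q.1 q.2)
    (hup : PeriodicX u) (hvp : PeriodicX v) (hpp : PeriodicX p)
    (hu0 : NoSlip u) (hv0 : NoSlip v) (hdiv : ∀ x y, pdx u x y + pdy v x y = 0)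
    (hequ : ∀ x ∈ Set.Icc (0 : ℝ) 1, ∀ y ∈ Set.Icc (0 : ℝ) 1,
      s * u x y + (a y : ℂ) * pdx u x y + pdx p x y = (ν : ℂ) * lap u x y + f x y)
    (heqv : ∀ x ∈ Set.Icc (0 : ℝ) 1, ∀ y ∈ Set.Icc (0 : ℝ) 1,
      s * v x y + (a y : ℂ) * pdx v x y + pdy p x y = (ν : ℂ) * lap v x y + g x y) :
    s.re * (nsq u + nsq v) + ν * (nsq (pdx u) + nsq (pdy u) + nsq (pdx v) + nsq (pdy v))
      = l2Inner u f + l2Inner v g := by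
  have energy_u : _ = l2Inner u (f - pdx p) :=
    advection_diffusion_energy_identity ha hu hup hu0 fun x hx y hy =>
      (eq_sub_of_add_eq (hequ x hx y hy)).trans (add_sub_assoc _ _ _)
  have energy_v : _ = l2Inner v (g - pdy p) :=
    advection_diffusion_energy_identity ha hv hvp hv0 fun x hx y hy =>
      (eq_sub_of_add_eq (heqv x hx y hy)).trans (add_sub_assoc _ _ _)
  have pressure := l2Inner_gradient_eq_zero hu hv hp hup hpp hv0 hdiv
  rw [l2Inner_sub_right hu.continuous hf hp.pdx.continuous] at energy_u
  rw [l2Inner_sub_right hv.continuous hg hp.pdy.continuous] at energy_v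
  linarith

end EnergyIdentity

lemma sqrt_le_sqrt_mul_sqrt_add_sqrt {D R W H : ℝ} (hR : 0 ≤ R) (hW : 0 ≤ W) (hH : 0 ≤ H)
    (hD : D ≤ R * (W + H)) : √D ≤ √R * (√W + √H) := by
  have subadd : √(W + H) ≤ √W + √H := by
    refine Real.sqrt_le_iff.mpr ⟨by positivity, ?_⟩
    rw [add_sq, Real.sq_sqrt hW, Real.sq_sqrt hH]
    linarith [mul_nonneg (Real.sqrt_nonneg W) (Real.sqrt_nonneg H)]
  calc √D ≤ √(R * (W + H)) := Real.sqrt_le_sqrt hD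
    _ = √R * √(W + H) := Real.sqrt_mul hR _
    _ ≤ √R * (√W + √H) := by gcongr

/-- If Re(s) ≥ 0, then ‖Dw‖ ≤ √R·(‖w‖ + ‖H‖). -/
theorem gradient_estimate
    (R : ℝ) (hR : 0 < R) (s : ℂ)
    (u v p F G : ℝ → ℝ → ℂ)
    (hu : SmoothFn u) (hv : SmoothFn v) (hp : SmoothFn p) (hF : SmoothFn F) (hG : SmoothFn G)
    (hup : PeriodicX u) (hvp : PeriodicX v) (hpp : PeriodicX p)
    (hFp : PeriodicX F) (hGp : PeriodicX G)
    (hub0 : ∀ x, u x 0 = 0) (hub1 : ∀ x, u x 1 = 0)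
    (hvb0 : ∀ x, v x 0 = 0) (hvb1 : ∀ x, v x 1 = 0)
    (hdiv : ∀ x y, pdx u x y + pdy v x y = 0)
    (heq1 : ∀ x ∈ Set.Icc (0:ℝ) 1, ∀ y ∈ Set.Icc (0:ℝ) 1,
      s * u x y + (y:ℂ) * pdx u x y + v x y + pdx p x y
        = (1/(R:ℂ)) * lap u x y + F x y)
    (heq2 : ∀ x ∈ Set.Icc (0:ℝ) 1, ∀ y ∈ Set.Icc (0:ℝ) 1,
      s * v x y + (y:ℂ) * pdx v x y + pdy p x y
        = (1/(R:ℂ)) * lap v x y + G x y)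
    (hsre : 0 ≤ s.re) :
    Real.sqrt (nsq (pdx u) + nsq (pdy u) + nsq (pdx v) + nsq (pdy v))
      ≤ Real.sqrt R * (Real.sqrt (nsq u + nsq v) + Real.sqrt (nsq F + nsq G)) := by
  have energy := shear_flow_energy_identity (s := s) (ν := 1 / R) (f := F - v) continuous_id' hu hv
    hp (hF.continuous.sub hv.continuous) hG.continuous hup hvp hpp
    (fun x => ⟨hub0 x, hub1 x⟩) (fun x => ⟨hvb0 x, hvb1 x⟩) hdiv
    (fun x hx y hy => by
      push_cast [Pi.sub_apply]
      linear_combination heq1 x hx y hy)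
    (fun x hx y hy => by
      push_cast
      exact heq2 x hx y hy)
  rw [l2Inner_sub_right hu.continuous hF.continuous hv.continuous] at energy
  have young_uv := two_mul_abs_l2Inner_le hu.continuous hv.continuous
  have young_uF := two_mul_abs_l2Inner_le hu.continuous hF.continuous
  have young_vG := two_mul_abs_l2Inner_le hv.continuous hG.continuous
  have hW : 0 ≤ nsq u + nsq v := add_nonneg (nsq_nonneg u) (nsq_nonneg v)
  have hH : 0 ≤ nsq F + nsq G := add_nonneg (nsq_nonneg F) (nsq_nonneg G)
  refine sqrt_le_sqrt_mul_sqrt_add_sqrt hR.le hW hH ((inv_mul_le_iff₀ hR).mp ?_)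
  rw [← one_div]
  linarith [mul_nonneg hsre hW, neg_abs_le (l2Inner u v), le_abs_self (l2Inner u F),
    le_abs_self (l2Inner v G)]

end
end

section
/- If |k| > √(R/√2) and I = F' − i·k·G, where F : [0,1] → ℂ is continuously differentiable and G : [0,1] → ℂ is continuous, then k²·‖ψ''‖² + k⁴·‖ψ'‖² + k⁶·‖ψ‖² ≤ 16·R²·(‖F‖² + ‖G‖²). -/
open MeasureTheory Complex

noncomputable section

/-- Square of the L² norm over [0,1]. -/
def l2sq (f : ℝ → ℂ) : ℝ := ∫ y in (0:ℝ)..(1:ℝ), ‖f y‖ ^ 2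

/-- L² inner product over [0,1]. -/
def l2ip (f g : ℝ → ℂ) : ℂ := ∫ y in (0:ℝ)..(1:ℝ), (starRingEnd ℂ) (f y) * g y

/-!
This is an energy estimate. Pairing the equation with `ψ` and integrating by parts, the real part
leaves `‖ψ''‖² + 2k²‖ψ'‖² + k⁴‖ψ‖²` plus a nonnegative multiple of `Re s`. On the other side stand
the forcing and `k Im ⟨ψ, U'ψ'⟩`, the only trace of the shear: everything else containing the
profile `U` pairs to a purely imaginary number. Since `|U'| ≤ 1`, Cauchy–Schwarz and Young's
inequality absorb these terms once `R² ≤ 2k⁴`.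
-/

section InnerProduct

variable {f g h : ℝ → ℂ}

lemma l2sq_nonneg (f : ℝ → ℂ) : 0 ≤ l2sq f :=
  intervalIntegral.integral_nonneg zero_le_one fun _ _ => by positivity

lemma l2sq_le_l2sq (hf : Continuous f) (hg : Continuous g)
    (hfg : ∀ y ∈ Set.Icc (0 : ℝ) 1, ‖f y‖ ≤ ‖g y‖) : l2sq f ≤ l2sq g :=
  intervalIntegral.integral_mono_on zero_le_one
    (Continuous.intervalIntegrable (by fun_prop) _ _)
    (Continuous.intervalIntegrable (by fun_prop) _ _)
    fun y hy => pow_le_pow_left₀ (norm_nonneg _) (hfg y hy) 2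

lemma l2ip_congr_right (hgh : ∀ y ∈ Set.Icc (0 : ℝ) 1, g y = h y) : l2ip f g = l2ip f h := by
  refine intervalIntegral.integral_congr fun y hy => ?_
  rw [Set.uIcc_of_le zero_le_one] at hy
  simp only [hgh y hy]

lemma intervalIntegrable_conj_mul (hf : Continuous f) (hg : Continuous g) (a b : ℝ) :
    IntervalIntegrable (fun y => (starRingEnd ℂ) (f y) * g y) volume a b :=
  ((continuous_conj.comp hf).mul hg).intervalIntegrable a b

lemma l2ip_add_right (hf : Continuous f) (hg : Continuous g) (hh : Continuous h) :
    l2ip f (fun y => g y + h y) = l2ip f g + l2ip f h := by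
  simp only [l2ip, mul_add]
  exact intervalIntegral.integral_add (intervalIntegrable_conj_mul hf hg 0 1)
    (intervalIntegrable_conj_mul hf hh 0 1)

lemma l2ip_const_mul_right (c : ℂ) (f g : ℝ → ℂ) :
    l2ip f (fun y => c * g y) = c * l2ip f g := by
  simp only [l2ip, mul_left_comm _ c, intervalIntegral.integral_const_mul]

lemma l2ip_sub_right (hf : Continuous f) (hg : Continuous g) (hh : Continuous h) :
    l2ip f (fun y => g y - h y) = l2ip f g - l2ip f h := by
  simp only [l2ip, mul_sub]
  exact intervalIntegral.integral_sub (intervalIntegrable_conj_mul hf hg 0 1)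
    (intervalIntegrable_conj_mul hf hh 0 1)

lemma l2ip_self (f : ℝ → ℂ) : l2ip f f = l2sq f := by
  simp only [l2ip, l2sq, conj_mul', ← ofReal_pow, intervalIntegral.integral_ofReal]

lemma im_l2ip_ofReal_mul_self (V : ℝ → ℝ) (f : ℝ → ℂ) :
    (l2ip f fun y => V y * f y).im = 0 := by
  simp only [l2ip, mul_left_comm _ (ofReal _), conj_mul', ← ofReal_pow, ← ofReal_mul,
    intervalIntegral.integral_ofReal, ofReal_im]

lemma norm_l2ip_le (hf : Continuous f) (hg : Continuous g) :
    ‖l2ip f g‖ ≤ √(l2sq f) * √(l2sq g) := by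
  have memLp_two {u : ℝ → ℂ} (hu : Continuous u) :
      MemLp u (ENNReal.ofReal 2) (volume.restrict (Set.Ioc 0 1)) := by
    rw [ENNReal.ofReal_ofNat, memLp_two_iff_integrable_sq_norm hu.aestronglyMeasurable]
    exact Continuous.integrableOn_Ioc (by fun_prop)
  calc ‖l2ip f g‖ ≤ ∫ y in (0 : ℝ)..1, ‖(starRingEnd ℂ) (f y) * g y‖ :=
        intervalIntegral.norm_integral_le_integral_norm zero_le_one
    _ = ∫ y in (0 : ℝ)..1, ‖f y‖ * ‖g y‖ := by simp only [norm_mul, RCLike.norm_conj]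
    _ ≤ √(l2sq f) * √(l2sq g) := by
        simpa only [l2sq, intervalIntegral.integral_of_le zero_le_one, Real.sqrt_eq_rpow,
          Real.rpow_two] using
          integral_mul_norm_le_Lp_mul_Lq Real.HolderConjugate.two_two (memLp_two hf) (memLp_two hg)

lemma mul_im_l2ip_le (c : ℝ) (hf : Continuous f) (hg : Continuous g) :
    c * (l2ip f g).im ≤ |c| * (√(l2sq f) * √(l2sq g)) :=
  calc c * (l2ip f g).im ≤ |c| * |(l2ip f g).im| := by rw [← abs_mul]; exact le_abs_self _
    _ ≤ |c| * (√(l2sq f) * √(l2sq g)) := by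
        gcongr
        exact (abs_im_le_norm _).trans (norm_l2ip_le hf hg)

lemma l2ip_deriv_right (hf : ContDiff ℝ 1 f) (hg : ContDiff ℝ 1 g) (hf0 : f 0 = 0)
    (hf1 : f 1 = 0) : l2ip f (deriv g) = -l2ip (deriv f) g := by
  have parts := intervalIntegral.integral_mul_deriv_eq_deriv_mul (a := 0) (b := 1)
    (fun y _ => (hf.differentiable_one y).hasDerivAt.star)
    (fun y _ => (hg.differentiable_one y).hasDerivAt)
    ((continuous_star.comp hf.continuous_deriv_one).intervalIntegrable 0 1)
    (hg.continuous_deriv_one.intervalIntegrable 0 1)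
  simpa [l2ip, hf0, hf1] using parts

lemma l2ip_iteratedDeriv_two (hf : ContDiff ℝ 2 f) (hf0 : f 0 = 0) (hf1 : f 1 = 0) :
    l2ip f (iteratedDeriv 2 f) = -l2sq (deriv f) := by
  rw [iteratedDeriv_succ, iteratedDeriv_one,
    l2ip_deriv_right (hf.of_le one_le_two) hf.deriv' hf0 hf1, l2ip_self]

lemma l2ip_iteratedDeriv_four (hf : ContDiff ℝ 4 f) (hf0 : f 0 = 0) (hf1 : f 1 = 0)
    (hf0' : deriv f 0 = 0) (hf1' : deriv f 1 = 0) :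
    l2ip f (iteratedDeriv 4 f) = l2sq (iteratedDeriv 2 f) := by
  have hf₁ : ContDiff ℝ 3 (deriv f) := hf.deriv'
  have hf₂ : ContDiff ℝ 2 (deriv (deriv f)) := hf₁.deriv'
  have hf₃ : ContDiff ℝ 1 (deriv (deriv (deriv f))) := hf₂.deriv'
  simp only [iteratedDeriv_succ, iteratedDeriv_zero]
  rw [l2ip_deriv_right (hf.of_le (by norm_num)) hf₃ hf0 hf1,
    l2ip_deriv_right (hf₁.of_le (by norm_num)) (hf₂.of_le (by norm_num)) hf0' hf1', neg_neg,
    l2ip_self]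

-- `U f'' = (U f')' - U' f'`, and the pairing of `f` with `(U f')'` is real.
lemma im_l2ip_ofReal_mul_iteratedDeriv_two {U : ℝ → ℝ} (hU : ContDiff ℝ 1 U)
    (hf : ContDiff ℝ 2 f) (hf0 : f 0 = 0) (hf1 : f 1 = 0) :
    (l2ip f fun y => U y * iteratedDeriv 2 f y).im
      = -(l2ip f fun y => ((deriv U y : ℝ) : ℂ) * deriv f y).im := by
  have hf' : ContDiff ℝ 1 (deriv f) := hf.deriv'
  have hUf' : ContDiff ℝ 1 fun y => (U y : ℂ) * deriv f y :=
    (ofRealCLM.contDiff.comp hU).mul hf'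
  have product_rule (y : ℝ) : (U y : ℂ) * iteratedDeriv 2 f y
      = deriv (fun y => (U y : ℂ) * deriv f y) y - (deriv U y : ℝ) * deriv f y := by
    rw [iteratedDeriv_succ, iteratedDeriv_one, eq_sub_iff_add_eq']
    exact (((hU.differentiable_one y).hasDerivAt.ofReal_comp).mul
      (hf'.differentiable_one y).hasDerivAt).deriv.symm
  have hU'f' : Continuous fun y => ((deriv U y : ℝ) : ℂ) * deriv f y :=
    (continuous_ofReal.comp hU.continuous_deriv_one).mul hf'.continuous
  rw [l2ip_congr_right fun y _ => product_rule y,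
    l2ip_sub_right hf.continuous hUf'.continuous_deriv_one hU'f',
    l2ip_deriv_right (hf.of_le one_le_two) hUf' hf0 hf1, sub_im, neg_im,
    im_l2ip_ofReal_mul_self, neg_zero, zero_sub]

end InnerProduct

section OrrSommerfeld

/-- The Orr–Sommerfeld operator with Reynolds number `R`, wavenumber `k` and spectral parameter
`s`, linearized about the shear flow with profile `U`. In terms of `ω = ψ'' - k²ψ` it reads
`(ω'' - k²ω)/R - (s + ikU)ω + ikU''ψ`, which is expanded here in derivatives of `ψ`. Couette flow
is `U y = y`, for which the last term vanishes. -/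
def orrSommerfeld (R k : ℝ) (s : ℂ) (U : ℝ → ℝ) (ψ : ℝ → ℂ) (y : ℝ) : ℂ :=
  (1 / (R : ℂ)) * iteratedDeriv 4 ψ y
    - (s + 2 * (k : ℂ) ^ 2 / (R : ℂ) + I * (k : ℂ) * (U y : ℂ)) * iteratedDeriv 2 ψ y
    + (s * (k : ℂ) ^ 2 + (k : ℂ) ^ 4 / (R : ℂ) + I * (k : ℂ) ^ 3 * (U y : ℂ)
      + I * (k : ℂ) * ((iteratedDeriv 2 U y : ℝ) : ℂ)) * ψ y

variable {U : ℝ → ℝ} {ψ F G : ℝ → ℂ}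

lemma l2ip_orrSommerfeld (R k : ℝ) (s : ℂ) (hU : ContDiff ℝ 2 U) (hψ : ContDiff ℝ 4 ψ) :
    l2ip ψ (orrSommerfeld R k s U ψ)
      = (1 / R : ℝ) * l2ip ψ (iteratedDeriv 4 ψ)
        - (s + (2 * k ^ 2 / R : ℝ)) * l2ip ψ (iteratedDeriv 2 ψ)
        + (s * (k ^ 2 : ℝ) + (k ^ 4 / R : ℝ)) * l2ip ψ ψ
        + I * l2ip ψ (fun y => ((k ^ 3 * U y + k * iteratedDeriv 2 U y : ℝ) : ℂ) * ψ y)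
        - I * (k * l2ip ψ (fun y => U y * iteratedDeriv 2 ψ y)) := by
  have hψ₀ : Continuous ψ := hψ.continuous
  have hψ₂ : Continuous (iteratedDeriv 2 ψ) := hψ.continuous_iteratedDeriv 2 (by norm_num)
  have hU₀ : Continuous U := hU.continuous
  simp only [← l2ip_const_mul_right]
  rw [← l2ip_sub_right hψ₀ (by fun_prop) (by fun_prop),
    ← l2ip_add_right hψ₀ (by fun_prop) (by fun_prop),
    ← l2ip_add_right hψ₀ (by fun_prop) (by fun_prop),
    ← l2ip_sub_right hψ₀ (by fun_prop) (by fun_prop)]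
  refine l2ip_congr_right fun y _ => ?_
  simp only [orrSommerfeld]
  push_cast
  ring

lemma re_l2ip_orrSommerfeld (R k : ℝ) (s : ℂ) (hU : ContDiff ℝ 2 U) (hψ : ContDiff ℝ 4 ψ)
    (hψ0 : ψ 0 = 0) (hψ1 : ψ 1 = 0) (hψ0' : deriv ψ 0 = 0) (hψ1' : deriv ψ 1 = 0) :
    (l2ip ψ (orrSommerfeld R k s U ψ)).re
      = (l2sq (iteratedDeriv 2 ψ) + 2 * k ^ 2 * l2sq (deriv ψ) + k ^ 4 * l2sq ψ) / R
        + s.re * (l2sq (deriv ψ) + k ^ 2 * l2sq ψ)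
        - k * (l2ip ψ fun y => ((deriv U y : ℝ) : ℂ) * deriv ψ y).im := by
  have hψ₂ : ContDiff ℝ 2 ψ := hψ.of_le (by norm_num)
  rw [l2ip_orrSommerfeld R k s hU hψ, l2ip_iteratedDeriv_four hψ hψ0 hψ1 hψ0' hψ1',
    l2ip_iteratedDeriv_two hψ₂ hψ0 hψ1, l2ip_self]
  simp only [add_re, sub_re, mul_neg, neg_re, re_mul_ofReal, ofReal_re, I_mul_re,
    im_ofReal_mul, im_l2ip_ofReal_mul_self,
    im_l2ip_ofReal_mul_iteratedDeriv_two (hU.of_le one_le_two) hψ₂ hψ0 hψ1]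
  ring

lemma re_l2ip_deriv_sub_I_mul (k : ℝ) (hψ : ContDiff ℝ 1 ψ) (hF : ContDiff ℝ 1 F)
    (hG : Continuous G) (hψ0 : ψ 0 = 0) (hψ1 : ψ 1 = 0) :
    (l2ip ψ fun y => deriv F y - I * k * G y).re
      = k * (l2ip ψ G).im - (l2ip (deriv ψ) F).re := by
  rw [l2ip_sub_right hψ.continuous hF.continuous_deriv_one (by fun_prop), l2ip_const_mul_right,
    l2ip_deriv_right hψ hF hψ0 hψ1, mul_assoc, sub_re, neg_re, I_mul_re, im_ofReal_mul]
  ring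

lemma orrSommerfeld_energy_le {R k : ℝ} {s : ℂ} (hR : 0 < R) (hs : 0 ≤ s.re)
    (hU : ContDiff ℝ 2 U) (hU' : ∀ y ∈ Set.Icc (0 : ℝ) 1, |deriv U y| ≤ 1)
    (hψ : ContDiff ℝ 4 ψ) (hψ0 : ψ 0 = 0) (hψ1 : ψ 1 = 0)
    (hψ0' : deriv ψ 0 = 0) (hψ1' : deriv ψ 1 = 0) (hF : ContDiff ℝ 1 F) (hG : Continuous G)
    (heq : ∀ y ∈ Set.Icc (0 : ℝ) 1, orrSommerfeld R k s U ψ y = deriv F y - I * k * G y) :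
    l2sq (iteratedDeriv 2 ψ) + 2 * k ^ 2 * l2sq (deriv ψ) + k ^ 4 * l2sq ψ
      ≤ R * (√(l2sq (deriv ψ)) * √(l2sq F) + |k| * (√(l2sq ψ) * √(l2sq G))
        + |k| * (√(l2sq ψ) * √(l2sq (deriv ψ)))) := by
  have hψ_one : ContDiff ℝ 1 ψ := hψ.of_le (by norm_num)
  have hψ' : Continuous (deriv ψ) := hψ_one.continuous_deriv_one
  have hU'ψ' : Continuous fun y => ((deriv U y : ℝ) : ℂ) * deriv ψ y :=
    (continuous_ofReal.comp (hU.of_le one_le_two).continuous_deriv_one).mul hψ'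
  have energy_identity := re_l2ip_orrSommerfeld R k s hU hψ hψ0 hψ1 hψ0' hψ1'
  rw [l2ip_congr_right heq, re_l2ip_deriv_sub_I_mul k hψ_one hF hG hψ0 hψ1] at energy_identity
  have damping_nonneg : 0 ≤ s.re * (l2sq (deriv ψ) + k ^ 2 * l2sq ψ) := by
    have := l2sq_nonneg ψ
    have := l2sq_nonneg (deriv ψ)
    positivity
  have forcing_F : -(l2ip (deriv ψ) F).re ≤ √(l2sq (deriv ψ)) * √(l2sq F) :=
    (neg_le_abs _).trans ((abs_re_le_norm _).trans (norm_l2ip_le hψ' hF.continuous))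
  have forcing_G := mul_im_l2ip_le k hψ.continuous hG
  have shear : k * (l2ip ψ fun y => ((deriv U y : ℝ) : ℂ) * deriv ψ y).im
      ≤ |k| * (√(l2sq ψ) * √(l2sq (deriv ψ))) := by
    refine (mul_im_l2ip_le k hψ.continuous hU'ψ').trans ?_
    gcongr
    refine l2sq_le_l2sq hU'ψ' hψ' fun y hy => ?_
    rw [norm_mul, norm_real, Real.norm_eq_abs]
    exact mul_le_of_le_one_left (norm_nonneg _) (hU' y hy)
  rw [← div_le_iff₀' hR]
  linarith

end OrrSommerfeld

lemma weighted_energy_le_of_energy_le {R K a p q f g : ℝ} (hRK : R ^ 2 ≤ 2 * K ^ 4)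
    (henergy : a ^ 2 + 2 * K ^ 2 * p ^ 2 + K ^ 4 * q ^ 2
      ≤ R * (p * f + K * (q * g) + K * (q * p))) :
    K ^ 2 * a ^ 2 + K ^ 4 * p ^ 2 + K ^ 6 * q ^ 2 ≤ 16 * R ^ 2 * (f ^ 2 + g ^ 2) := by
  have absorb : R ^ 2 * (K ^ 2 * q ^ 2) ≤ 2 * K ^ 4 * (K ^ 2 * q ^ 2) := by gcongr
  have young_F : 8 * K ^ 2 * (R * (p * f)) ≤ K ^ 4 * p ^ 2 + 16 * R ^ 2 * f ^ 2 := by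
    linarith [sq_nonneg (K ^ 2 * p - 4 * R * f)]
  have young_G : 8 * K ^ 2 * (R * (K * (q * g))) ≤ K ^ 6 * q ^ 2 + 16 * R ^ 2 * g ^ 2 := by
    linarith [sq_nonneg (K ^ 3 * q - 4 * R * g)]
  have young_shear : 8 * K ^ 2 * (R * (K * (q * p))) ≤ 8 * K ^ 4 * p ^ 2 + 4 * K ^ 6 * q ^ 2 := by
    linarith [sq_nonneg (K * (2 * K * p - R * q))]
  have scaled := mul_le_mul_of_nonneg_left henergy (show 0 ≤ 8 * K ^ 2 by positivity)
  have : 0 ≤ K ^ 2 * a ^ 2 := by positivity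
  have : 0 ≤ K ^ 4 * p ^ 2 := by positivity
  have : 0 ≤ K ^ 6 * q ^ 2 := by positivity
  linarith

lemma sq_le_two_mul_pow_four_of_sqrt_le {R K : ℝ} (hR : 0 ≤ R) (hK : √(R / √2) ≤ K) :
    R ^ 2 ≤ 2 * K ^ 4 := by
  have hRK : R ≤ K ^ 2 * √2 := by
    rwa [Real.sqrt_le_left ((Real.sqrt_nonneg _).trans hK), div_le_iff₀ (by positivity)] at hK
  calc R ^ 2 ≤ (K ^ 2 * √2) ^ 2 := by gcongr
    _ = 2 * K ^ 4 := by rw [mul_pow, Real.sq_sqrt zero_le_two]; ring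

theorem orr_sommerfeld_full_estimate_large_k_general {R k : ℝ} (hR : 0 < R) {s : ℂ}
    (hs : 0 ≤ s.re) {U : ℝ → ℝ} (hU : ContDiff ℝ 2 U)
    (hU' : ∀ y ∈ Set.Icc (0 : ℝ) 1, |deriv U y| ≤ 1)
    {ψ : ℝ → ℂ} (hψ : ContDiff ℝ 4 ψ)
    (hψ0 : ψ 0 = 0) (hψ1 : ψ 1 = 0) (hψ0' : deriv ψ 0 = 0) (hψ1' : deriv ψ 1 = 0)
    {F G : ℝ → ℂ} (hF : ContDiff ℝ 1 F) (hG : Continuous G)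
    (heq : ∀ y ∈ Set.Icc (0 : ℝ) 1, orrSommerfeld R k s U ψ y = deriv F y - I * k * G y)
    (hk : √(R / √2) ≤ |k|) :
    k ^ 2 * l2sq (iteratedDeriv 2 ψ) + k ^ 4 * l2sq (deriv ψ) + k ^ 6 * l2sq ψ
      ≤ 16 * R ^ 2 * (l2sq F + l2sq G) := by
  have henergy := orrSommerfeld_energy_le hR hs hU hU' hψ hψ0 hψ1 hψ0' hψ1' hF hG heq
  have hweighted := weighted_energy_le_of_energy_le (a := √(l2sq (iteratedDeriv 2 ψ)))
    (p := √(l2sq (deriv ψ))) (q := √(l2sq ψ)) (f := √(l2sq F)) (g := √(l2sq G))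
    (sq_le_two_mul_pow_four_of_sqrt_le hR.le hk)
  simp only [Real.sq_sqrt (l2sq_nonneg _), Even.pow_abs (by decide : Even 2),
    Even.pow_abs (by decide : Even 4), Even.pow_abs (by decide : Even 6)] at hweighted
  exact hweighted henergy

/-- combined estimate for ψ when |k| > √(R/√2) and I = F' − i·k·G. -/
theorem orr_sommerfeld_full_estimate_large_k
    (R : ℝ) (hR : 0 < R) (k : ℤ) (s : ℂ) (hs : 0 ≤ s.re)
    (ψ : ℝ → ℂ) (hψ : ContDiff ℝ 4 ψ)
    (hb0 : ψ 0 = 0) (hb1 : ψ 1 = 0) (hb0' : deriv ψ 0 = 0) (hb1' : deriv ψ 1 = 0)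
    (F G : ℝ → ℂ) (hF : ContDiff ℝ 1 F) (hG : Continuous G)
    (heq : ∀ y ∈ Set.Icc (0:ℝ) 1,
      (1/(R:ℂ)) * iteratedDeriv 4 ψ y
        - (s + 2 * (k:ℂ)^2 / (R:ℂ) + Complex.I * (k:ℂ) * (y:ℂ)) * iteratedDeriv 2 ψ y
        + (s * (k:ℂ)^2 + (k:ℂ)^4 / (R:ℂ) + Complex.I * (k:ℂ)^3 * (y:ℂ)) * ψ y
        = deriv F y - Complex.I * (k:ℂ) * G y)
    (hk : Real.sqrt (R / Real.sqrt 2) < |(k:ℝ)|) :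
    (k:ℝ)^2 * l2sq (iteratedDeriv 2 ψ) + (k:ℝ)^4 * l2sq (deriv ψ)
      + (k:ℝ)^6 * l2sq ψ ≤ 16 * R^2 * (l2sq F + l2sq G) := by
  exact_mod_cast orr_sommerfeld_full_estimate_large_k_general (k := k) (U := id) hR hs contDiff_id
    (by simp) hψ hb0 hb1 hb0' hb1' hF hG
    (by simpa [orrSommerfeld, iteratedDeriv_succ] using heq) hk.le

end
end
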